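/- Let X₁, X₂ be finite sets, η > 0, and N₁, N₂ ≥ 2. Then there exist K₁ and K₂ (depending only on |X₁|, |X₂|, η, N₁, N₂) such that for every n ≥ 1 and every pair of codes C₁ ⊆ X₁ⁿ with |C₁| ≥ K₁ and C₂ ⊆ X₂ⁿ with |C₂| ≥ K₂, there exist pairwise distinct codewords x₁, …, x_{N₁} ∈ C₁ and pairwise distinct codewords y₁, …, y_{N₂} ∈ C₂ and a distribution D ∈ Δ(X₁²×X₂²) such that for all 1 ≤ i₁ < i₂ ≤ N₁ and 1 ≤ j₁ < j₂ ≤ N₂, d_∞(τ_{x_{i₁}, x_{i₂}, y_{j₁}, y_{j₂}}, D) ≤ η. -/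

import Mathlib

/-- `P` is a probability distribution on the finite set `X`. -/
def IsDist {X : Type*} [Fintype X] (P : X → ℝ) : Prop :=
  (∀ x, 0 ≤ P x) ∧ ∑ x, P x = 1

/-- The type (empirical distribution) of a length-`n` vector `v` over alphabet `X`. -/
noncomputable def typeOf {X : Type*} [DecidableEq X] {n : ℕ} (v : Fin n → X) : X → ℝ :=
  fun a => ((Finset.univ.filter (fun j => v j = a)).card : ℝ) / n

theorem ramsey_end (κ : Type*) [Fintype κ] [Nonempty κ] (M : ℕ) :
    ∃ K : ℕ, ∀ (α : Type) [LinearOrder α] (c : α → α → κ) (S : Finset α), K ≤ S.card →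
      ∃ T ⊆ S, T.card = M ∧ ∃ d : α → κ, ∀ i ∈ T, ∀ j ∈ T, i < j → c i j = d i := by
  classical
  induction M with
  | zero =>
    refine ⟨0, fun α _ c S _ => ⟨∅, by simp, by simp, fun _ => Classical.arbitrary κ, by simp⟩⟩
  | succ M ih =>
    obtain ⟨K, hK⟩ := ih
    refine ⟨Fintype.card κ * K + 1, fun α _ c S hS => ?_⟩
    have hne : S.Nonempty := Finset.card_pos.mp (by omega)
    set a := S.min' hne with ha
    have haS : a ∈ S := Finset.min'_mem _ _
    have hcard : Fintype.card κ * K ≤ (S.erase a).card := by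
      rw [Finset.card_erase_of_mem haS]; omega
    obtain ⟨k, -, hk⟩ := Finset.exists_le_card_fiber_of_mul_le_card_of_maps_to
      (s := S.erase a) (t := (Finset.univ : Finset κ)) (f := fun b => c a b) (n := K)
      (fun _ _ => Finset.mem_univ _) Finset.univ_nonempty (by simpa using hcard)
    obtain ⟨T, hTS, hTc, d, hd⟩ := hK α c _ hk
    have hT : ∀ b ∈ T, b ≠ a ∧ b ∈ S ∧ c a b = k := by
      intro b hb
      have := hTS hb
      simp only [Finset.mem_filter, Finset.mem_erase] at this
      exact ⟨this.1.1, this.1.2, this.2⟩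
    have haT : a ∉ T := fun h => (hT a h).1 rfl
    refine ⟨insert a T, ?_, by rw [Finset.card_insert_of_notMem haT, hTc],
      fun b => if b = a then k else d b, ?_⟩
    · intro b hb
      rcases Finset.mem_insert.mp hb with rfl | hb
      · exact haS
      · exact (hT b hb).2.1
    · intro i hi j hj hij
      rcases Finset.mem_insert.mp hj with hj | hj
      · exfalso
        have hiS : i ∈ S := by
          rcases Finset.mem_insert.mp hi with hi | hi
          · rw [hi]; exact haS
          · exact (hT i hi).2.1
        have := Finset.min'_le S i hiS
        rw [hj] at hij
        exact absurd hij (not_lt.mpr this)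
      · rcases Finset.mem_insert.mp hi with hi | hi
        · simp only [if_pos hi]; rw [hi]; exact (hT j hj).2.2
        · simp only [if_neg (hT i hi).1]; exact hd i hi j hj hij

theorem ramsey_pairs (κ : Type*) [Fintype κ] [Nonempty κ] (N : ℕ) :
    ∃ K : ℕ, ∀ c : Fin K → Fin K → κ, ∃ g : Fin N → Fin K, StrictMono g ∧
      ∃ k : κ, ∀ i j, i < j → c (g i) (g j) = k := by
  classical
  obtain ⟨K, hK⟩ := ramsey_end κ (Fintype.card κ * N)
  refine ⟨K, fun c => ?_⟩
  obtain ⟨T, -, hTc, d, hd⟩ := hK (Fin K) c Finset.univ (by simp)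
  obtain ⟨k, -, hk⟩ := Finset.exists_le_card_fiber_of_mul_le_card_of_maps_to
      (s := T) (t := (Finset.univ : Finset κ)) (f := d) (n := N)
      (fun _ _ => Finset.mem_univ _) Finset.univ_nonempty (by simp [hTc])
  obtain ⟨U, hU, hUc⟩ := Finset.exists_subset_card_eq hk
  have hm : ∀ i, U.orderEmbOfFin hUc i ∈ T ∧ d (U.orderEmbOfFin hUc i) = k := by
    intro i
    have := hU (Finset.orderEmbOfFin_mem U hUc i)
    simpa using this
  refine ⟨U.orderEmbOfFin hUc, (U.orderEmbOfFin hUc).strictMono, k, fun i j hij => ?_⟩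
  rw [hd _ (hm i).1 _ (hm j).1 ((U.orderEmbOfFin hUc).strictMono hij)]
  exact (hm i).2

theorem typeOf_isDist {X : Type*} [Fintype X] [DecidableEq X] {n : ℕ} (hn : 1 ≤ n)
    (v : Fin n → X) : IsDist (typeOf v) := by
  have hn' : (n : ℝ) ≠ 0 := by positivity
  refine ⟨fun x => by unfold typeOf; positivity, ?_⟩
  unfold typeOf
  rw [← Finset.sum_div, div_eq_one_iff_eq hn', ← Nat.cast_sum,
    ← Finset.card_eq_sum_card_fiberwise (fun _ _ => Finset.mem_univ _)]
  simp

theorem typeOf_le_one {X : Type*} [DecidableEq X] {n : ℕ} (v : Fin n → X) (a : X) :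
    typeOf v a ≤ 1 := by
  unfold typeOf
  apply div_le_one_of_le₀ _ (by positivity)
  have := Finset.card_le_univ (Finset.univ.filter (fun j => v j = a))
  simp only [Fintype.card_fin] at this
  exact_mod_cast this

theorem floor_close {m : ℕ} (hm : 0 < m) {η s t : ℝ} (hη : 1 / (m : ℝ) ≤ η) (hs : 0 ≤ s)
    (ht : 0 ≤ t) (h : ⌊s * m⌋₊ = ⌊t * m⌋₊) : |s - t| ≤ η := by
  have hm' : (0 : ℝ) < m := by exact_mod_cast hm
  have h1 := Nat.floor_le (mul_nonneg hs hm'.le)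
  have h2 := Nat.lt_floor_add_one (s * m)
  have h3 := Nat.floor_le (mul_nonneg ht hm'.le)
  have h4 := Nat.lt_floor_add_one (t * m)
  rw [h] at h1 h2
  have : |s - t| * m ≤ 1 := by
    rw [← abs_of_pos hm', ← abs_mul, abs_le]
    constructor <;> nlinarith
  refine le_trans ?_ hη
  rwa [le_div_iff₀ hm']

theorem stmt_17 (X₁ X₂ : Type*) [Fintype X₁] [DecidableEq X₁] [Fintype X₂] [DecidableEq X₂]
    (η : ℝ) (hη : 0 < η) (N₁ N₂ : ℕ) (hN₁ : 2 ≤ N₁) (hN₂ : 2 ≤ N₂) :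
    ∃ K₁ K₂ : ℕ, ∀ n : ℕ, 1 ≤ n →
      ∀ (C₁ : Finset (Fin n → X₁)) (C₂ : Finset (Fin n → X₂)),
        K₁ ≤ C₁.card → K₂ ≤ C₂.card →
        ∃ (x : Fin N₁ → Fin n → X₁) (y : Fin N₂ → Fin n → X₂),
          Function.Injective x ∧ Function.Injective y ∧
          (∀ i, x i ∈ C₁) ∧ (∀ j, y j ∈ C₂) ∧
          ∃ D : X₁ × X₁ × X₂ × X₂ → ℝ, IsDist D ∧
            ∀ i₁ i₂ : Fin N₁, i₁ < i₂ → ∀ j₁ j₂ : Fin N₂, j₁ < j₂ →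
              ∀ z, |typeOf (fun k => (x i₁ k, x i₂ k, y j₁ k, y j₂ k)) z - D z| ≤ η := by
  classical
  obtain ⟨m', hm'⟩ := exists_nat_one_div_lt hη
  set m := m' + 1 with hmdef
  have hm0 : 0 < m := Nat.succ_pos _
  have hmη : 1 / (m : ℝ) ≤ η := by
    have : (m : ℝ) = m' + 1 := by simp [hmdef]
    rw [this]; exact hm'.le

  obtain ⟨K₁, hK₁⟩ := ramsey_pairs (X₁ × X₁ × X₂ × X₂ → Fin (m + 1)) N₁
  haveI : Fintype (X₁ × X₁ × X₂ × X₂ → Fin (m + 1)) := inferInstance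
  haveI : Fintype (Fin K₁ → X₁ × X₁ × X₂ × X₂ → Fin (m + 1)) := Pi.instFintype
  haveI : Fintype (Fin K₁ → Fin K₁ → X₁ × X₁ × X₂ × X₂ → Fin (m + 1)) := Pi.instFintype
  obtain ⟨K₂, hK₂⟩ := ramsey_pairs (Fin K₁ → Fin K₁ → X₁ × X₁ × X₂ × X₂ → Fin (m + 1)) N₂
  refine ⟨K₁, K₂, fun n hn C₁ C₂ hC₁ hC₂ => ?_⟩
  let e₁ : Fin K₁ → Fin n → X₁ := fun i => (C₁.equivFin.symm (Fin.castLE hC₁ i)).1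
  let e₂ : Fin K₂ → Fin n → X₂ := fun i => (C₂.equivFin.symm (Fin.castLE hC₂ i)).1
  have he₁ : Function.Injective e₁ :=
    Subtype.val_injective.comp (C₁.equivFin.symm.injective.comp (Fin.castLE_injective hC₁))
  have he₂ : Function.Injective e₂ :=
    Subtype.val_injective.comp (C₂.equivFin.symm.injective.comp (Fin.castLE_injective hC₂))
  let τ : Fin K₁ → Fin K₁ → Fin K₂ → Fin K₂ → X₁ × X₁ × X₂ × X₂ → ℝ :=
    fun i₁ i₂ j₁ j₂ => typeOf (fun k => (e₁ i₁ k, e₁ i₂ k, e₂ j₁ k, e₂ j₂ k))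
  have hlt : ∀ i₁ i₂ j₁ j₂ z, ⌊τ i₁ i₂ j₁ j₂ z * m⌋₊ < m + 1 := by
    intro i₁ i₂ j₁ j₂ z
    have h1 : τ i₁ i₂ j₁ j₂ z ≤ 1 := typeOf_le_one _ _
    refine Nat.lt_succ_of_le (Nat.floor_le_of_le ?_)
    have : (0 : ℝ) ≤ m := Nat.cast_nonneg m
    nlinarith
  obtain ⟨g₂, hg₂, c, hc⟩ := hK₂ (fun j₁ j₂ i₁ i₂ z => ⟨_, hlt i₁ i₂ j₁ j₂ z⟩)
  obtain ⟨g₁, hg₁, k, hk⟩ := hK₁ c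
  have key : ∀ i₁ i₂ : Fin N₁, i₁ < i₂ → ∀ j₁ j₂ : Fin N₂, j₁ < j₂ → ∀ z,
      ⌊τ (g₁ i₁) (g₁ i₂) (g₂ j₁) (g₂ j₂) z * m⌋₊ = (k z).val := by
    intro i₁ i₂ hi j₁ j₂ hj z
    rw [← hk i₁ i₂ hi, ← hc j₁ j₂ hj]
  let a₁ : Fin N₁ := ⟨0, by omega⟩
  let b₁ : Fin N₁ := ⟨1, by omega⟩
  let a₂ : Fin N₂ := ⟨0, by omega⟩
  let b₂ : Fin N₂ := ⟨1, by omega⟩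
  have h₁ : a₁ < b₁ := by simp [a₁, b₁]
  have h₂ : a₂ < b₂ := by simp [a₂, b₂]
  refine ⟨fun i => e₁ (g₁ i), fun j => e₂ (g₂ j), he₁.comp hg₁.injective,
    he₂.comp hg₂.injective, fun i => (C₁.equivFin.symm _).2, fun i => (C₂.equivFin.symm _).2,
    τ (g₁ a₁) (g₁ b₁) (g₂ a₂) (g₂ b₂), typeOf_isDist hn _, ?_⟩
  intro i₁ i₂ hi j₁ j₂ hj z
  exact floor_close hm0 hmη ((typeOf_isDist hn _).1 z) ((typeOf_isDist hn _).1 z)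
    ((key i₁ i₂ hi j₁ j₂ hj z).trans (key a₁ b₁ h₁ a₂ b₂ h₂ z).symm)
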